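/- arXiv:1303.2388 — 4 statements merged into one kernel-verified Lean document; each statement's English description precedes it below -/
import Mathlib

section
/- Strong duality for information relaxation: assume the primal value V := sup_{u ∈ 𝒰_F} 𝔼[R(u, ·)] is finite, and define h*(u, ω) := R(u, ω) − V. Then (i) h* is a dual feasible penalty, i.e. 𝔼[h*(u, ·)] ≤ 0 for every u ∈ 𝒰_F; (ii) for every ω ∈ Ω, sup_{u ∈ 𝒰} (R(u, ω) − h*(u, ω)) = V; and consequently (iii) the infimum over all dual feasible penalties h of 𝔼[sup_{u ∈ 𝒰} (R(u, ω) − h(u, ω))] equals V and is attained at h = h*. -/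
open MeasureTheory

/-!
Weak duality says that every dual value bounds every primal value `𝔼[R u]` from above.
Conversely, subtracting the penalty `R - c` leaves the constant pathwise reward `c`, and this
penalty is feasible exactly when `c` bounds the primal values. So the dual values are precisely
the upper bounds of the primal values, and the least of them is the primal supremum.
-/

section InformationRelaxation

variable {Ω U : Type*}

/-- The pathwise relaxed reward `S_h`, in which the strategy may anticipate the scenario `ω`.
As a real supremum it is `0` at every `ω` where the penalized rewards are unbounded above. -/
noncomputable def relaxedReward (R h : U → Ω → ℝ) (ω : Ω) : ℝ :=
  ⨆ u, (R u ω - h u ω)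

theorem relaxedReward_sub_const [Nonempty U] (R : U → Ω → ℝ) (c : ℝ) (ω : Ω) :
    relaxedReward R (fun u ω => R u ω - c) ω = c := by
  simp only [relaxedReward, sub_sub_cancel, ciSup_const]

variable [MeasurableSpace Ω]

/-- Dual feasibility of a penalty `h`: its expectation exists and is nonpositive under every
strategy in the nonanticipative class `UF`. -/
def IsDualFeasible (μ : Measure Ω) (UF : Set U) (h : U → Ω → ℝ) : Prop :=
  (∀ u ∈ UF, Integrable (h u) μ) ∧ ∀ u ∈ UF, ∫ ω, h u ω ∂μ ≤ 0

/-- The expected rewards of the nonanticipative strategies, whose supremum is the primal value. -/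
def primalValues (μ : Measure Ω) (UF : Set U) (R : U → Ω → ℝ) : Set ℝ :=
  Set.range fun u : UF => ∫ ω, R u ω ∂μ

/-- The objective values of the dual problem. Boundedness and integrability of the relaxed reward
are imposed so that neither its supremum nor its expectation takes a junk value. -/
def dualValues (μ : Measure Ω) (UF : Set U) (R : U → Ω → ℝ) : Set ℝ :=
  {y | ∃ h : U → Ω → ℝ, IsDualFeasible μ UF h ∧
    (∀ ω, BddAbove (Set.range fun u => R u ω - h u ω)) ∧
    Integrable (relaxedReward R h) μ ∧ y = ∫ ω, relaxedReward R h ω ∂μ}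

theorem mem_upperBounds_primalValues {μ : Measure Ω} {UF : Set U} {R : U → Ω → ℝ} {c : ℝ} :
    c ∈ upperBounds (primalValues μ UF R) ↔ ∀ u ∈ UF, ∫ ω, R u ω ∂μ ≤ c := by
  simp only [primalValues, mem_upperBounds, Set.forall_mem_range, Subtype.forall]

theorem IsDualFeasible.integral_le_integral_relaxedReward {μ : Measure Ω} {UF : Set U}
    {R h : U → Ω → ℝ} {u : U} (hh : IsDualFeasible μ UF h) (hu : u ∈ UF)
    (hR : Integrable (R u) μ)
    (hbdd : ∀ᵐ ω ∂μ, BddAbove (Set.range fun v => R v ω - h v ω))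
    (hS : Integrable (relaxedReward R h) μ) :
    ∫ ω, R u ω ∂μ ≤ ∫ ω, relaxedReward R h ω ∂μ :=
  calc ∫ ω, R u ω ∂μ
      ≤ ∫ ω, R u ω ∂μ - ∫ ω, h u ω ∂μ := (le_sub_self_iff _).mpr (hh.2 u hu)
    _ = ∫ ω, (R u ω - h u ω) ∂μ := (integral_sub hR (hh.1 u hu)).symm
    _ ≤ ∫ ω, relaxedReward R h ω ∂μ :=
      integral_mono_ae (hR.sub (hh.1 u hu)) hS (hbdd.mono fun _ hω => le_ciSup hω u)

variable {P : Measure Ω} [IsProbabilityMeasure P] {UF : Set U} {R : U → Ω → ℝ}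

theorem isDualFeasible_sub_const_iff (hR : ∀ u ∈ UF, Integrable (R u) P) (c : ℝ) :
    IsDualFeasible P UF (fun u ω => R u ω - c) ↔ c ∈ upperBounds (primalValues P UF R) := by
  have hint : ∀ u ∈ UF, Integrable (fun ω => R u ω - c) P :=
    fun u hu => (hR u hu).sub (integrable_const c)
  have hexp : ∀ u ∈ UF, ∫ ω, (R u ω - c) ∂P = ∫ ω, R u ω ∂P - c := fun u hu => by
    rw [integral_sub (hR u hu) (integrable_const c), integral_const, probReal_univ, one_smul]
  rw [IsDualFeasible, and_iff_right hint, mem_upperBounds_primalValues]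
  exact forall₂_congr fun u hu => by rw [hexp u hu, sub_nonpos]

theorem mem_dualValues_of_isDualFeasible_sub_const [Nonempty U] {c : ℝ}
    (hc : IsDualFeasible P UF fun u ω => R u ω - c) : c ∈ dualValues P UF R := by
  have hS : relaxedReward R (fun u ω => R u ω - c) = fun _ => c :=
    funext (relaxedReward_sub_const R c)
  refine ⟨_, hc, fun ω => ?_, ?_, ?_⟩
  · simp only [sub_sub_cancel, Set.range_const, bddAbove_singleton]
  · exact hS ▸ integrable_const c
  · rw [hS, integral_const, probReal_univ, one_smul]

theorem strong_duality_information_relaxation_general [Nonempty U]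
    (hR : ∀ u ∈ UF, Integrable (R u) P) :
    (∀ c, IsDualFeasible P UF (fun u ω => R u ω - c) ↔ c ∈ upperBounds (primalValues P UF R)) ∧
    (∀ c ω, relaxedReward R (fun u ω => R u ω - c) ω = c) ∧
    dualValues P UF R = upperBounds (primalValues P UF R) := by
  refine ⟨isDualFeasible_sub_const_iff hR, relaxedReward_sub_const R, Set.Subset.antisymm ?_ ?_⟩
  · rintro _ ⟨h, hh, hbdd, hS, rfl⟩
    exact mem_upperBounds_primalValues.mpr fun u hu =>
      hh.integral_le_integral_relaxedReward hu (hR u hu) (.of_forall hbdd) hS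
  · exact fun c hc =>
      mem_dualValues_of_isDualFeasible_sub_const ((isDualFeasible_sub_const_iff hR c).mpr hc)

end InformationRelaxation

/-- **Strong duality for information relaxation.**
Let `(Ω, 𝒢, P)` be a probability space, `U` the set of all (possibly anticipative) control
strategies and `UF ⊆ U` the nonempty set of nonanticipative strategies, with `R u` integrable
for `u ∈ UF`.  Assume the primal value `V = sup_{u ∈ UF} 𝔼[R u]` is finite, and define the
penalty `hStar u ω = R u ω - V`.  Then:
(i) `hStar` is a dual feasible penalty, i.e. `𝔼[hStar u] ≤ 0` for every `u ∈ UF`;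
(ii) for every `ω`, `sup_{u ∈ U} (R u ω - hStar u ω) = V`;
(iii) the infimum over all dual feasible penalties `h` of `𝔼[sup_{u ∈ U} (R u ω - h u ω)]`
equals `V` and is attained (membership of `V` in the set of dual values being witnessed by
`h = hStar`, thanks to (i) and (ii)). -/
theorem strong_duality_information_relaxation
    {Ω U : Type*} [MeasurableSpace Ω] (P : Measure Ω) [IsProbabilityMeasure P]
    (UF : Set U) (hUF : UF.Nonempty)
    (R : U → Ω → ℝ)
    (hRint : ∀ u ∈ UF, Integrable (R u) P)
    (hfin : BddAbove (Set.range fun u : UF => ∫ ω, R u.1 ω ∂P))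
    (V : ℝ) (hVdef : V = ⨆ u : UF, ∫ ω, R u.1 ω ∂P)
    (hStar : U → Ω → ℝ) (hhStar : ∀ u ω, hStar u ω = R u ω - V) :
    (∀ u ∈ UF, (∫ ω, hStar u ω ∂P) ≤ 0) ∧
    (∀ ω, (⨆ u : U, (R u ω - hStar u ω)) = V) ∧
    IsLeast {y : ℝ | ∃ h : U → Ω → ℝ,
      (∀ u ∈ UF, Integrable (h u) P) ∧
      (∀ u ∈ UF, (∫ ω, h u ω ∂P) ≤ 0) ∧
      (∀ ω, BddAbove (Set.range fun u : U => R u ω - h u ω)) ∧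
      Integrable (fun ω => ⨆ u : U, (R u ω - h u ω)) P ∧
      y = ∫ ω, (⨆ u : U, (R u ω - h u ω)) ∂P} V := by
  obtain rfl : hStar = fun u ω => R u ω - V := funext₂ hhStar
  have : Nonempty UF := hUF.to_subtype
  have : Nonempty U := hUF.nonempty
  obtain ⟨hfeas, hrelax, hdual⟩ := strong_duality_information_relaxation_general hRint
  have hV : IsLUB (primalValues P UF R) V := hVdef ▸ isLUB_ciSup hfin
  have hleast : IsLeast (dualValues P UF R) V := hdual ▸ hV
  refine ⟨((hfeas V).mpr hV.1).2, hrelax V, ?_⟩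
  simp only [dualValues, IsDualFeasible, and_assoc] at hleast
  exact hleast
end

section
/- Complementary slackness: assume the primal value V := sup_{u ∈ 𝒰_F} 𝔼[R(u, ·)] is finite, so that by strong duality inf over dual feasible penalties h of 𝔼[S_h] equals V, where S_h(ω) := sup_{u ∈ 𝒰} (R(u, ω) − h(u, ω)). Let u° ∈ 𝒰_F and let h° be a dual feasible penalty with S_{h°} measurable and integrable. Then u° is optimal for the primal problem (𝔼[R(u°, ·)] = V) and h° is optimal for the dual problem (𝔼[S_{h°}] = V) if and only if 𝔼[h°(u°, ·)] = 0 and 𝔼[R(u°, ·) − h°(u°, ·)] = 𝔼[S_{h°}]. -/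
open MeasureTheory

/-! For a single strategy with reward `f`, penalty `g` and pathwise bound `S` on `f - g`, the gap
`𝔼[S] - 𝔼[f]` is the sum of `-𝔼[g]` and `𝔼[S] - 𝔼[f - g]`, both nonnegative: weak duality says that
the sum is nonnegative, and complementary slackness that it vanishes iff both terms do. As the
primal value lies between `𝔼[f]` and `𝔼[S]`, both problems are solved iff the gap is zero. -/

section DualityGap

variable {Ω : Type*} [MeasurableSpace Ω] {μ : Measure Ω} {f g S : Ω → ℝ}

theorem integral_le_integral_of_sub_le (hf : Integrable f μ) (hg : Integrable g μ)
    (hS : Integrable S μ) (hg_nonpos : ∫ ω, g ω ∂μ ≤ 0) (hle : ∀ᵐ ω ∂μ, f ω - g ω ≤ S ω) :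
    ∫ ω, f ω ∂μ ≤ ∫ ω, S ω ∂μ :=
  calc ∫ ω, f ω ∂μ
    _ = ∫ ω, g ω ∂μ + ∫ ω, (f ω - g ω) ∂μ := by
        rw [integral_sub hf hg, add_sub_cancel]
    _ ≤ 0 + ∫ ω, S ω ∂μ := add_le_add hg_nonpos (integral_mono_ae (hf.sub hg) hS hle)
    _ = ∫ ω, S ω ∂μ := zero_add _

theorem integral_eq_integral_iff_of_sub_le (hf : Integrable f μ) (hg : Integrable g μ)
    (hS : Integrable S μ) (hg_nonpos : ∫ ω, g ω ∂μ ≤ 0) (hle : ∀ᵐ ω ∂μ, f ω - g ω ≤ S ω) :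
    ∫ ω, f ω ∂μ = ∫ ω, S ω ∂μ ↔
      ∫ ω, g ω ∂μ = 0 ∧ ∫ ω, (f ω - g ω) ∂μ = ∫ ω, S ω ∂μ :=
  calc ∫ ω, f ω ∂μ = ∫ ω, S ω ∂μ
    _ ↔ ∫ ω, g ω ∂μ + ∫ ω, (f ω - g ω) ∂μ = 0 + ∫ ω, S ω ∂μ := by
        rw [integral_sub hf hg, add_sub_cancel, zero_add]
    _ ↔ ∫ ω, g ω ∂μ = 0 ∧ ∫ ω, (f ω - g ω) ∂μ = ∫ ω, S ω ∂μ :=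
        add_eq_add_iff_eq_and_eq hg_nonpos (integral_mono_ae (hf.sub hg) hS hle)

end DualityGap

theorem eq_ciSup_and_eq_ciSup_iff_of_forall_le {α : Type*} {ι : Sort*}
    [ConditionallyCompleteLattice α] {f : ι → α} {a : α} (hle : ∀ i, f i ≤ a) (i₀ : ι) :
    (f i₀ = ⨆ i, f i) ∧ (a = ⨆ i, f i) ↔ f i₀ = a := by
  have : Nonempty ι := ⟨i₀⟩
  have hlower : f i₀ ≤ ⨆ i, f i := le_ciSup ⟨a, Set.forall_mem_range.2 hle⟩ i₀
  have hupper : ⨆ i, f i ≤ a := ciSup_le hle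
  refine ⟨fun ⟨hf, ha⟩ => hf.trans ha.symm, fun h => ?_⟩
  exact ⟨hlower.antisymm (hupper.trans_eq h.symm), (h.symm.trans_le hlower).antisymm hupper⟩

/-- `ι` indexes the nonanticipative strategies only: anticipative ones enter solely through the
pathwise bound `S`, of which the supremum over all strategies is one choice. -/
theorem complementary_slackness_information_relaxation_general
    {Ω ι : Type*} [MeasurableSpace Ω] {μ : Measure Ω} {R h : ι → Ω → ℝ} {S : Ω → ℝ}
    (hR : ∀ i, Integrable (R i) μ) (hh : ∀ i, Integrable (h i) μ)
    (hfeas : ∀ i, ∫ ω, h i ω ∂μ ≤ 0) (hS : Integrable S μ)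
    (hle : ∀ i, ∀ᵐ ω ∂μ, R i ω - h i ω ≤ S ω) (i₀ : ι) :
    (∫ ω, R i₀ ω ∂μ = ⨆ i, ∫ ω, R i ω ∂μ) ∧ (∫ ω, S ω ∂μ = ⨆ i, ∫ ω, R i ω ∂μ) ↔
      ∫ ω, h i₀ ω ∂μ = 0 ∧ ∫ ω, (R i₀ ω - h i₀ ω) ∂μ = ∫ ω, S ω ∂μ := by
  have weak_duality (i : ι) : ∫ ω, R i ω ∂μ ≤ ∫ ω, S ω ∂μ :=
    integral_le_integral_of_sub_le (hR i) (hh i) hS (hfeas i) (hle i)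
  exact (eq_ciSup_and_eq_ciSup_iff_of_forall_le weak_duality i₀).trans
    (integral_eq_integral_iff_of_sub_le (hR i₀) (hh i₀) hS (hfeas i₀) (hle i₀))

/-- **Complementary slackness for information relaxation.**
Let `(Ω, 𝒢, P)` be a probability space, `U` the set of all (possibly anticipative) control
strategies, `UF ⊆ U` the nonempty set of nonanticipative strategies, with `R u` integrable for
`u ∈ UF`, and assume the primal value `V = sup_{u ∈ UF} 𝔼[R u]` is finite.  Let `u0 ∈ UF` and
let `h0` be a dual feasible penalty whose pathwise relaxed reward
`S(ω) = ⨆ u, (R u ω - h0 u ω)` is (well-defined, measurable and) integrable.  Then `u0` is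
optimal for the primal problem (`𝔼[R u0] = V`) and `h0` is optimal for the dual problem
(`𝔼[S] = V`) if and only if `𝔼[h0 u0] = 0` and `𝔼[R u0 - h0 u0] = 𝔼[S]`. -/
theorem complementary_slackness_information_relaxation
    {Ω U : Type*} [MeasurableSpace Ω] (P : Measure Ω) [IsProbabilityMeasure P]
    (UF : Set U) (hUF : UF.Nonempty)
    (R : U → Ω → ℝ)
    (hRint : ∀ u ∈ UF, Integrable (R u) P)
    (hfin : BddAbove (Set.range fun u : UF => ∫ ω, R u.1 ω ∂P))
    (V : ℝ) (hVdef : V = ⨆ u : UF, ∫ ω, R u.1 ω ∂P)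
    (u0 : U) (hu0 : u0 ∈ UF)
    (h0 : U → Ω → ℝ)
    (hint : ∀ u ∈ UF, Integrable (h0 u) P)
    (hfeas : ∀ u ∈ UF, (∫ ω, h0 u ω ∂P) ≤ 0)
    (hBdd : ∀ ω, BddAbove (Set.range fun u : U => R u ω - h0 u ω))
    (hSint : Integrable (fun ω => ⨆ u : U, (R u ω - h0 u ω)) P) :
    ((∫ ω, R u0 ω ∂P = V) ∧ ((∫ ω, (⨆ u : U, (R u ω - h0 u ω)) ∂P) = V)) ↔
    ((∫ ω, h0 u0 ω ∂P = 0) ∧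
      ((∫ ω, (R u0 ω - h0 u0 ω) ∂P) = ∫ ω, (⨆ u : U, (R u ω - h0 u ω)) ∂P)) := by
  subst hVdef
  exact complementary_slackness_information_relaxation_general (ι := UF) (fun u => hRint u u.2)
    (fun u => hint u u.2) (fun u => hfeas u u.2) hSint
    (fun u => .of_forall fun ω => le_ciSup (hBdd ω) u.1) ⟨u0, hu0⟩
end

section
/- Pathwise strong duality for the value-function-based penalty: assume V_0,…,V_K are bounded measurable functions satisfying the Bellman recursion V_K = Λ and V_k(x) = sup_{a ∈ 𝒜} { g_k(x, a) + ∫_𝒱 V_{k+1}(f(x, a, v')) μ(dv') } for k = 0,…,K−1. Then for every initial state x and every fixed noise realization v ∈ 𝒱^K, sup_{a ∈ 𝒜^K} { Σ_{k=0}^{K−1} g_k(x_k, a_k) + Λ(x_K) − Σ_{k=0}^{K−1} ( V_{k+1}(x_{k+1}) − ∫_𝒱 V_{k+1}(f(x_k, a_k, v')) μ(dv') ) } = V_0(x), where x_k is the trajectory generated from x by (a, v). -/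
open MeasureTheory

/-- The controlled trajectory of a finite-horizon MDP: `x_0 = x`,
`x_{k+1} = f x_k a_k v_{k+1}` for `k < K` (constant after time `K`). -/
def mdpTraj {X A V : Type*} (f : X → A → V → X) (K : ℕ) (x : X)
    (a : Fin K → A) (v : Fin K → V) : ℕ → X
  | 0 => x
  | n + 1 =>
    if h : n < K then f (mdpTraj f K x a v n) (a ⟨n, h⟩) (v ⟨n, h⟩)
    else mdpTraj f K x a v n

/-- Total reward `Σ_{k=0}^{K-1} g_k(x_k, a_k) + Λ(x_K)` of the action sequence `a`
under the noise realization `v`, starting from `x`. -/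
def mdpReward {X A V : Type*} (f : X → A → V → X) (K : ℕ)
    (g : ℕ → X → A → ℝ) (Λ : X → ℝ) (x : X) (a : Fin K → A) (v : Fin K → V) : ℝ :=
  (∑ k : Fin K, g k (mdpTraj f K x a v k) (a k)) + Λ (mdpTraj f K x a v K)

/-- The value-function-based penalty
`M*(a,v) = Σ_{k=0}^{K-1} ( W_{k+1}(x_{k+1}) - ∫ W_{k+1}(f(x_k, a_k, v')) μ(dv') )`,
where `x_k` is the trajectory generated from `x` by `(a, v)` and `W_k` are the
value functions. -/
noncomputable def MstarPenalty {X A V : Type*} [MeasurableSpace V] (f : X → A → V → X)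
    (K : ℕ) (W : ℕ → X → ℝ) (μ : Measure V) (x : X) (a : Fin K → A) (v : Fin K → V) : ℝ :=
  ∑ k : Fin K,
    (W ((k : ℕ) + 1) (mdpTraj f K x a v ((k : ℕ) + 1)) -
      ∫ v', W ((k : ℕ) + 1) (f (mdpTraj f K x a v (k : ℕ)) (a k) v') ∂μ)

/-! Since `W K = Λ`, the terms `W (k + 1) x_{k + 1}` of the penalty telescope, and the penalized
reward becomes `W 0 x` plus the sum of the Bellman gaps
`g_k(x_k, a_k) + ∫ W_{k+1}(f(x_k, a_k, v')) μ(dv') - W_k(x_k)`. By the Bellman recursion each gap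
has supremum `0` over the action, whatever the state, so the sum is at most `0`; choosing nearly
optimal actions by feedback along the fixed noise path brings it arbitrarily close to `0`. -/

section Trajectory

variable {X A V : Type*} {K : ℕ} (f : X → A → V → X) (x : X) (v : Fin K → V)

/-- The open-loop action sequence that the feedback policy `π` produces along the noise path `v`.
The closed-loop trajectory is encoded as the `mdpTraj` of the system whose actions are decision
rules `p : X → A`. -/
def feedbackActions (π : Fin K → X → A) (k : Fin K) : A :=
  π k (mdpTraj (fun z (p : X → A) w => f z (p z) w) K x π v k)

lemma mdpTraj_feedbackActions (π : Fin K → X → A) (n : ℕ) :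
    mdpTraj f K x (feedbackActions f x v π) v n =
      mdpTraj (fun z (p : X → A) w => f z (p z) w) K x π v n := by
  induction n with
  | zero => rfl
  | succ n ih => simp only [mdpTraj, ih, feedbackActions]

lemma feedbackActions_apply (π : Fin K → X → A) (k : Fin K) :
    feedbackActions f x v π k = π k (mdpTraj f K x (feedbackActions f x v π) v k) := by
  rw [mdpTraj_feedbackActions, feedbackActions]

lemma isLUB_range_sum_mdpTraj {R : Type*} [Field R] [LinearOrder R] [IsStrictOrderedRing R]
    {q : Fin K → X → A → R} {s : Fin K → R} (hq : ∀ k z, IsLUB (Set.range (q k z)) (s k)) :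
    IsLUB (Set.range fun a : Fin K → A => ∑ k, q k (mdpTraj f K x a v k) (a k)) (∑ k, s k) := by
  refine ⟨?_, fun b hb => le_of_forall_pos_le_add fun ε hε => ?_⟩
  · rintro _ ⟨a, rfl⟩
    exact Finset.sum_le_sum fun k _ => (hq k _).1 ⟨a k, rfl⟩
  · obtain ⟨δ, hδ, hKδ⟩ := exists_pos_mul_lt hε (K : R)
    have near_optimal : ∀ k z, ∃ p, s k - δ < q k z p := fun k z => by
      simpa only [Set.exists_range_iff] using (lt_isLUB_iff (hq k z)).1 (sub_lt_self (s k) hδ)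
    choose π hπ using near_optimal
    set a := feedbackActions f x v π
    calc ∑ k, s k
        ≤ ∑ k, (q k (mdpTraj f K x a v k) (a k) + δ) := by
          refine Finset.sum_le_sum fun k _ => ?_
          rw [show a k = π k _ from feedbackActions_apply f x v π k]
          exact (sub_lt_iff_lt_add.1 (hπ k _)).le
      _ = ∑ k, q k (mdpTraj f K x a v k) (a k) + K * δ := by
          simp only [Finset.sum_add_distrib, Finset.sum_const, Finset.card_univ,
            Fintype.card_fin, nsmul_eq_mul]
      _ ≤ b + ε := add_le_add (hb ⟨a, rfl⟩) hKδ.le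

lemma sum_sub_mdpTraj (W : ℕ → X → ℝ) (a : Fin K → A) :
    ∑ k : Fin K, (W (k + 1) (mdpTraj f K x a v (k + 1)) - W k (mdpTraj f K x a v k)) =
      W K (mdpTraj f K x a v K) - W 0 x := by
  rw [Fin.sum_univ_eq_sum_range fun k =>
    W (k + 1) (mdpTraj f K x a v (k + 1)) - W k (mdpTraj f K x a v k)]
  exact Finset.sum_range_sub (fun k => W k (mdpTraj f K x a v k)) K

lemma mdpReward_sub_penalty (g c : ℕ → X → A → ℝ) {Λ : X → ℝ} {W : ℕ → X → ℝ}
    (hWK : ∀ z, W K z = Λ z) (a : Fin K → A) :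
    mdpReward f K g Λ x a v - ∑ k : Fin K,
        (W (k + 1) (mdpTraj f K x a v (k + 1)) - c k (mdpTraj f K x a v k) (a k)) =
      W 0 x + ∑ k : Fin K, (g k (mdpTraj f K x a v k) (a k) + c k (mdpTraj f K x a v k) (a k) -
        W k (mdpTraj f K x a v k)) := by
  have telescope := sum_sub_mdpTraj f x v W a
  simp only [mdpReward, ← hWK, Finset.sum_sub_distrib, Finset.sum_add_distrib] at telescope ⊢
  linarith

/-- Here `c k z a` takes the place of the expected next value `∫ v', W (k + 1) (f z a v') ∂μ`. -/
theorem mstar_pathwise_strong_duality_general (g c : ℕ → X → A → ℝ) {Λ : X → ℝ} {W : ℕ → X → ℝ}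
    (hWK : ∀ z, W K z = Λ z)
    (hBellman : ∀ k < K, ∀ z, IsLUB (Set.range fun a => g k z a + c k z a) (W k z)) :
    IsLUB (Set.range fun a : Fin K → A => mdpReward f K g Λ x a v - ∑ k : Fin K,
      (W (k + 1) (mdpTraj f K x a v (k + 1)) - c k (mdpTraj f K x a v k) (a k))) (W 0 x) := by
  have gap_isLUB (k : Fin K) (z : X) :
      IsLUB (Set.range fun a => g k z a + c k z a - W k z) 0 := by
    simpa only [← Set.range_comp, Function.comp_def, OrderIso.subRight_apply, sub_self] using
      (OrderIso.subRight (W k z)).isLUB_image'.2 (hBellman k k.isLt z)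
  have gaps_isLUB := isLUB_range_sum_mdpTraj f x v gap_isLUB
  simp only [mdpReward_sub_penalty f x v g c hWK]
  simpa only [← Set.range_comp, Function.comp_def, OrderIso.addLeft_apply,
    Finset.sum_const_zero, add_zero] using (OrderIso.addLeft (W 0 x)).isLUB_image'.2 gaps_isLUB

end Trajectory

lemma isLUB_range_add_integral {A V : Type*} [Nonempty A] [MeasurableSpace V] {μ : Measure V}
    [IsFiniteMeasure μ] {g : A → ℝ} {h : A → V → ℝ} {C D : ℝ} (hg : ∀ a, g a ≤ C)
    (hh : ∀ a v, |h a v| ≤ D) :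
    IsLUB (Set.range fun a => g a + ∫ v, h a v ∂μ) (⨆ a, (g a + ∫ v, h a v ∂μ)) := by
  refine isLUB_ciSup ⟨C + D * μ.real Set.univ, ?_⟩
  rintro _ ⟨a, rfl⟩
  have integral_le : ‖∫ v, h a v ∂μ‖ ≤ D * μ.real Set.univ :=
    norm_integral_le_of_norm_le_const (.of_forall (hh a))
  exact add_le_add (hg a) ((le_abs_self _).trans integral_le)

/-- **Pathwise strong duality for the value-function-based penalty.**
If the bounded measurable functions `W_0, …, W_K` satisfy the Bellman recursion
`W_K = Λ` and `W_k(x) = sup_{a ∈ 𝒜} { g_k(x,a) + ∫ W_{k+1}(f(x,a,v')) μ(dv') }` for `k < K`,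
then for every initial state `x` and every fixed noise realization `v ∈ 𝒱^K`, the inner
(deterministic) optimization problem with the value-function-based penalty `M*` has optimal
value `W_0(x)`:
`sup_{a ∈ 𝒜^K} { Σ_k g_k(x_k,a_k) + Λ(x_K) - M*(a,v) } = W_0(x)`. -/
theorem mstar_pathwise_strong_duality
    {X A V : Type*} [MeasurableSpace X] [MeasurableSpace A] [MeasurableSpace V]
    [Nonempty A]
    (μ : Measure V) [IsProbabilityMeasure μ]
    (K : ℕ) (hK : 1 ≤ K)
    (f : X → A → V → X) (hf : Measurable fun q : X × A × V => f q.1 q.2.1 q.2.2)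
    (g : ℕ → X → A → ℝ) (hg : ∀ k, Measurable fun q : X × A => g k q.1 q.2)
    (hgbd : ∃ C, ∀ k x a, |g k x a| ≤ C)
    (Λ : X → ℝ) (hΛ : Measurable Λ) (hΛbd : ∃ C, ∀ x, |Λ x| ≤ C)
    (W : ℕ → X → ℝ) (hWmeas : ∀ k, Measurable (W k)) (hWbd : ∃ C, ∀ k x, |W k x| ≤ C)
    (hWK : ∀ x, W K x = Λ x)
    (hBellman : ∀ k < K, ∀ x : X,
      W k x = ⨆ a : A, (g k x a + ∫ v', W (k + 1) (f x a v') ∂μ)) :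
    ∀ (x : X) (v : Fin K → V),
      (⨆ a : Fin K → A,
        (mdpReward f K g Λ x a v - MstarPenalty f K W μ x a v)) = W 0 x := by
  obtain ⟨C, hC⟩ := hgbd
  obtain ⟨D, hD⟩ := hWbd
  exact fun x v => (mstar_pathwise_strong_duality_general f x v g
    (fun k z a => ∫ v', W (k + 1) (f z a v') ∂μ) hWK fun k hk z => hBellman k hk z ▸
      isLUB_range_add_integral (fun a => le_of_abs_le (hC k z a)) fun a v' => hD _ _).ciSup_eq
end

section
/- Optimality of the gradient-based penalty for MDPs with concave terminal reward (Appendix D): let 𝒜 ⊆ ℝ^d be convex, and for each noise realization v ∈ 𝒱^K let F(·, v) : ℝ^{Kd} → ℝ be concave and differentiable, with F(a, v) representing the terminal reward Λ(x_K(a, v)) of the action sequence a ∈ 𝒜^K. Let a* be a nonanticipative policy and define the gradient-based penalty M_g*(a, v) := ∇_a F(a*(v), v)ᵀ (a − a*(v)). Then: (i) for every fixed v, sup_{a ∈ 𝒜^K} [ F(a, v) − M_g*(a, v) ] = F(a*(v), v); (ii) if the first-order condition 𝔼_{v ∼ μ^{⊗K}}[ ∇_a F(a*(v), v)ᵀ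 (a(v) − a*(v)) ] ≤ 0 holds for every nonanticipative policy a, then M_g* is a dual feasible penalty; and (iii) if moreover a* is an optimal nonanticipative policy, i.e. 𝔼[F(a*(v), v)] = V_0(x) := sup over nonanticipative policies of the expected reward, then 𝔼_{v ∼ μ^{⊗K}}[ sup_{a ∈ 𝒜^K} ( F(a, v) − M_g*(a, v) ) ] = V_0(x), i.e. M_g* achieves strong duality. -/
open MeasureTheory

/-- A nonanticipative policy: each `p k` is a measurable function of the noise that
depends only on the noises `v_1, …, v_k` (indices `j < k`). -/
def Nonanticipative {A V : Type*} [MeasurableSpace A] [MeasurableSpace V] (K : ℕ)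
    (p : Fin K → (Fin K → V) → A) : Prop :=
  (∀ k, Measurable (p k)) ∧
  ∀ (k : Fin K) (v v' : Fin K → V),
    (∀ j : Fin K, (j : ℕ) < (k : ℕ) → v j = v' j) → p k v = p k v'

/-!
Concavity puts `F(·, v)` below its tangent hyperplane at `a*(v)`. Subtracting the penalty removes
exactly the linear part of that hyperplane, so the penalized reward is at most `F(a*(v), v)`
whatever the action sequence, with equality at `a*(v)` itself, where the penalty vanishes.
-/

section Tangent

variable {E : Type*} [NormedAddCommGroup E] [NormedSpace ℝ E] {f : E → ℝ} {f' : E →L[ℝ] ℝ}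
  {C S : Set E} {x y : E}

theorem le_add_of_concaveOn_of_hasFDerivWithinAt (hf : ConcaveOn ℝ C f)
    (hf' : HasFDerivWithinAt f f' C x) (hx : x ∈ C) (hy : y ∈ C) :
    f y ≤ f x + f' (y - x) := by
  let line : ℝ →ᵃ[ℝ] E := AffineMap.lineMap x y
  have hconc : ConcaveOn ℝ (line ⁻¹' C) (f ∘ line) := hf.comp_affineMap line
  have hderiv : HasDerivWithinAt (f ∘ line) (f' (y - x)) (line ⁻¹' C) 0 :=
    hf'.comp_hasDerivWithinAt_of_eq 0 AffineMap.hasDerivWithinAt_lineMap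
      (Set.mapsTo_preimage line C) (by simp [line])
  have hslope : slope (f ∘ line) 0 1 ≤ f' (y - x) :=
    hconc.slope_le_of_hasDerivWithinAt (by simpa [line] using hx) (by simpa [line] using hy)
      one_pos hderiv
  have hsub : f y - f x ≤ f' (y - x) := by simpa [slope_def_field, line] using hslope
  linarith

theorem iSup_sub_fderivWithin_eq_of_concaveOn (hf : ConcaveOn ℝ C f)
    (hf' : HasFDerivWithinAt f f' C x) (hSC : S ⊆ C) (hx : x ∈ S) :
    ⨆ a : S, (f a - f' (a - x)) = f x := by
  have hgreatest : IsGreatest ((fun a => f a - f' (a - x)) '' S) (f x) := by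
    refine ⟨⟨x, hx, by simp⟩, ?_⟩
    rintro _ ⟨a, ha, rfl⟩
    exact sub_le_iff_le_add.2
      (le_add_of_concaveOn_of_hasFDerivWithinAt hf hf' (hSC hx) (hSC ha))
  rw [← hgreatest.csSup_eq, sSup_image']

end Tangent

theorem gradient_penalty_strong_duality_general
    {K : ℕ} {E V : Type*} [NormedAddCommGroup E] [NormedSpace ℝ E] [MeasurableSpace E]
    [MeasurableSpace V] (P : Measure (Fin K → V))
    {S C : Set (Fin K → E)} (hSC : S ⊆ C)
    {F : (Fin K → E) → (Fin K → V) → ℝ} (hFconc : ∀ v, ConcaveOn ℝ C fun a => F a v)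
    {astar : (Fin K → V) → Fin K → E} (hastar : ∀ v, astar v ∈ S)
    {F' : (Fin K → V) → (Fin K → E) →L[ℝ] ℝ}
    (hF' : ∀ v, HasFDerivWithinAt (fun a => F a v) (F' v) C (astar v))
    {M : (Fin K → E) → (Fin K → V) → ℝ} (hM : ∀ a v, M a v = F' v (a - astar v)) :
    (∀ v, ⨆ a : S, (F a v - M a v) = F (astar v) v) ∧
    ((∀ q : Fin K → (Fin K → V) → E, Nonanticipative K q → (∀ v, (fun k => q k v) ∈ S) →
        ∫ v, F' v ((fun k => q k v) - astar v) ∂P ≤ 0) →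
      ∀ q : Fin K → (Fin K → V) → E, Nonanticipative K q → (∀ v, (fun k => q k v) ∈ S) →
        ∫ v, M (fun k => q k v) v ∂P ≤ 0) ∧
    (∫ v, F (astar v) v ∂P =
        ⨆ q : {q : Fin K → (Fin K → V) → E //
            Nonanticipative K q ∧ ∀ v, (fun k => q k v) ∈ S},
          ∫ v, F (fun k => q.1 k v) v ∂P →
      ∫ v, ⨆ a : S, (F a v - M a v) ∂P =
        ⨆ q : {q : Fin K → (Fin K → V) → E //
            Nonanticipative K q ∧ ∀ v, (fun k => q k v) ∈ S},
          ∫ v, F (fun k => q.1 k v) v ∂P) := by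
  have hsup (v : Fin K → V) : ⨆ a : S, (F a v - M a v) = F (astar v) v := by
    simpa only [hM] using iSup_sub_fderivWithin_eq_of_concaveOn (hFconc v) (hF' v) hSC (hastar v)
  refine ⟨hsup, fun hfoc => ?_, fun hopt => ?_⟩
  · simpa only [hM] using hfoc
  · simpa only [hsup] using hopt

/-- **Optimality of the gradient-based penalty for MDPs with concave terminal reward**
(Appendix D).  The action set `Aset ⊆ ℝ^d` is convex; for each noise realization `v ∈ 𝒱^K`
the terminal reward `F(·, v) : ℝ^{Kd} → ℝ` is concave and differentiable; `pstar` is a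
nonanticipative policy with values in `Aset`, with realized action sequence
`astar(v) = (pstar k v)_k`, and the gradient-based penalty is
`Mg(a, v) = ∇_a F(astar(v), v)ᵀ (a − astar(v))` (the Fréchet derivative of `F(·,v)` at
`astar(v)` applied to `a − astar(v)`).  Then:
(i) for every `v`, `sup_{a ∈ Aset^K} [F(a,v) − Mg(a,v)] = F(astar(v), v)`;
(ii) if the first-order condition
`𝔼_{v ∼ μ^{⊗K}}[∇_a F(astar(v), v)ᵀ (a(v) − astar(v))] ≤ 0` holds for every nonanticipative
policy `a` with values in `Aset`, then `Mg` is a dual feasible penalty;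
(iii) if moreover `pstar` is an optimal nonanticipative policy, i.e.
`𝔼[F(astar(v), v)]` equals `V_0 = sup` over nonanticipative policies of the expected
reward, then `𝔼[ sup_{a ∈ Aset^K} (F(a,v) − Mg(a,v)) ] = V_0`: `Mg` achieves strong
duality. -/
theorem gradient_penalty_strong_duality
    {d K : ℕ} {Vn : Type*} [MeasurableSpace Vn]
    (μ : Measure Vn) [IsProbabilityMeasure μ]
    (Aset : Set (EuclideanSpace ℝ (Fin d))) (hAconv : Convex ℝ Aset)
    (F : (Fin K → EuclideanSpace ℝ (Fin d)) → (Fin K → Vn) → ℝ)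
    (hFconc : ∀ v : Fin K → Vn, ConcaveOn ℝ Set.univ fun a => F a v)
    (hFdiff : ∀ v : Fin K → Vn, Differentiable ℝ fun a => F a v)
    (pstar : Fin K → (Fin K → Vn) → EuclideanSpace ℝ (Fin d))
    (hpstar : Nonanticipative K pstar)
    (hpstarA : ∀ (v : Fin K → Vn) (k : Fin K), pstar k v ∈ Aset)
    (Mg : (Fin K → EuclideanSpace ℝ (Fin d)) → (Fin K → Vn) → ℝ)
    (hMg : ∀ (a : Fin K → EuclideanSpace ℝ (Fin d)) (v : Fin K → Vn),
      Mg a v = fderiv ℝ (fun b => F b v) (fun k => pstar k v)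
        (a - fun k => pstar k v)) :
    (∀ v : Fin K → Vn,
      (⨆ a : {a : Fin K → EuclideanSpace ℝ (Fin d) // ∀ k, a k ∈ Aset},
        (F a.1 v - Mg a.1 v)) = F (fun k => pstar k v) v) ∧
    ((∀ q : Fin K → (Fin K → Vn) → EuclideanSpace ℝ (Fin d),
        Nonanticipative K q → (∀ (v : Fin K → Vn) (k : Fin K), q k v ∈ Aset) →
        (∫ v, fderiv ℝ (fun b => F b v) (fun k => pstar k v)
            ((fun k => q k v) - fun k => pstar k v)
          ∂(Measure.pi fun _ : Fin K => μ)) ≤ 0) →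
      ∀ q : Fin K → (Fin K → Vn) → EuclideanSpace ℝ (Fin d),
        Nonanticipative K q → (∀ (v : Fin K → Vn) (k : Fin K), q k v ∈ Aset) →
        (∫ v, Mg (fun k => q k v) v ∂(Measure.pi fun _ : Fin K => μ)) ≤ 0) ∧
    ((∫ v, F (fun k => pstar k v) v ∂(Measure.pi fun _ : Fin K => μ)) =
        (⨆ q : {q : Fin K → (Fin K → Vn) → EuclideanSpace ℝ (Fin d) //
            Nonanticipative K q ∧ ∀ (v : Fin K → Vn) (k : Fin K), q k v ∈ Aset},
          ∫ v, F (fun k => q.1 k v) v ∂(Measure.pi fun _ : Fin K => μ)) →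
      (∫ v, (⨆ a : {a : Fin K → EuclideanSpace ℝ (Fin d) // ∀ k, a k ∈ Aset},
          (F a.1 v - Mg a.1 v)) ∂(Measure.pi fun _ : Fin K => μ)) =
        ⨆ q : {q : Fin K → (Fin K → Vn) → EuclideanSpace ℝ (Fin d) //
            Nonanticipative K q ∧ ∀ (v : Fin K → Vn) (k : Fin K), q k v ∈ Aset},
          ∫ v, F (fun k => q.1 k v) v ∂(Measure.pi fun _ : Fin K => μ)) :=
  gradient_penalty_strong_duality_general (S := {a | ∀ k, a k ∈ Aset})
    (Measure.pi fun _ : Fin K => μ) (Set.subset_univ _) hFconc hpstarA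
    (fun v => (hFdiff v _).hasFDerivAt.hasFDerivWithinAt) hMg
end
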